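/- Let d ≥ 2 and λ ∈ [0,1), and let V(x) = F(T x) − F(x*) for x ∈ H₊. Then there exists a function τ : H₊ → [0,∞) with τ(x) > 0 for every x ∈ H₊ \ {x*} and B[x, τ(x)] ⊆ H₊ for all x ∈ H₊, such that for every compact set K ⊆ H₊: lim_{n→∞} sup V(φ(n)) = 0, where the supremum is over all x ∈ K and all τ-perturbed solutions φ : ℕ → H₊ with φ(0) = x (i.e., for each m, φ(m+1) ∈ B[T y, τ(T y)] for some y ∈ B[φ(m), τ(φ(m))]). Explicitly: for every ε > 0 there exists N such that V(φ(n)) ≤ ε for all n ≥ N and all such φ. -/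

import Mathlib

noncomputable section

open Metric Set Filter

/-- Euclidean space `ℝ^d` with `d = d' + 2 ≥ 2`. -/
abbrev Euc (d : ℕ) := EuclideanSpace ℝ (Fin (d + 2))

/-- The standard basis vectors. -/
def e (d : ℕ) (j : Fin (d + 2)) : Euc d := EuclideanSpace.single j 1

/-- The Douglas–Rachford operator for the unit sphere and the line
`L_λ = {t e₁ + λ e₂}`, given by its explicit formula
`T x = (x₁/‖x‖) e₁ + ((1 − 1/‖x‖) x₂ + λ) e₂ + (1 − 1/‖x‖) ∑_{j=3}^d x_j e_j`. -/
def DR (d : ℕ) (lam : ℝ) (x : Euc d) : Euc d :=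
  (x 0 / ‖x‖) • e d 0 + ((1 - 1 / ‖x‖) * x 1 + lam) • e d 1 +
    ∑ j ∈ Finset.univ.filter (fun j : Fin (d + 2) => 2 ≤ (j : ℕ)),
      ((1 - 1 / ‖x‖) * x j) • e d j

/-- The intersection point `x* = √(1−λ²) e₁ + λ e₂`. -/
def xStar (d : ℕ) (lam : ℝ) : Euc d := Real.sqrt (1 - lam ^ 2) • e d 0 + lam • e d 1

/-- The Lyapunov-type function of Benoist:
`F(x) = ½‖x − λe₂‖² − λ log(1 + √(1 − x₁²)) + λ√(1 − x₁²) + (λ−1) log x₁`. -/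
def F (d : ℕ) (lam : ℝ) (x : Euc d) : ℝ :=
  (1 / 2) * ‖x - lam • e d 1‖ ^ 2 - lam * Real.log (1 + Real.sqrt (1 - (x 0) ^ 2)) +
    lam * Real.sqrt (1 - (x 0) ^ 2) + (lam - 1) * Real.log (x 0)

/-- `Δ = {x : 0 < x₁ ≤ 1}`. -/
def Delta (d : ℕ) : Set (Euc d) := {x | 0 < x 0 ∧ x 0 ≤ 1}

/-- `H₊ = {x : x₁ > 0}`. -/
def Hplus (d : ℕ) : Set (Euc d) := {x | 0 < x 0}

/-- `V(x) = F(T x) − F(x*)` on `H₊`. -/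
def V (d : ℕ) (lam : ℝ) (x : Euc d) : ℝ := F d lam (DR d lam x) - F d lam (xStar d lam)

/-- A `σ`-perturbed solution of the iteration `x_{n+1} = T x_n` starting at `x` is a sequence
`φ : ℕ → H₊` with `φ(0) = x` such that for every `n` there exists
`y ∈ B[φ(n), σ(φ(n))]` with `φ(n+1) ∈ B[T y, σ(T y)]`. -/
def PerturbedSol (d : ℕ) (T : Euc d → Euc d) (σ : Euc d → ℝ) (x : Euc d)
    (φ : ℕ → Euc d) : Prop :=
  φ 0 = x ∧ (∀ n : ℕ, φ n ∈ Hplus d) ∧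
    ∀ n : ℕ, ∃ y ∈ closedBall (φ n) (σ (φ n)), φ (n + 1) ∈ closedBall (T y) (σ (T y))



/-- A Lyapunov function on the half space. -/
def WL (d : ℕ) (lam : ℝ) (x : Euc d) : ℝ :=
  (1 / 2) * ‖x - lam • e d 1‖ ^ 2 - (1 / 4) * (x 0) ^ 2 - (1 / 2) * (1 - lam ^ 2) * Real.log (x 0)

lemma DR_eq (d : ℕ) (lam : ℝ) (x : Euc d) :
    DR d lam x = lam • e d 1 + ((1 - 1 / ‖x‖) • x +
      (x 0 / ‖x‖ - (1 - 1 / ‖x‖) * x 0) • e d 0) := by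
  have key : ∑ j ∈ Finset.univ.filter (fun j : Fin (d + 2) => 2 ≤ (j : ℕ)),
      ((1 - 1 / ‖x‖) * x j) • e d j =
      ∑ j : Fin (d + 2), (if 2 ≤ (j : ℕ) then ((1 - 1 / ‖x‖) * x j) • e d j else 0) := by
    rw [Finset.sum_filter]
  rw [DR, key, Fin.sum_univ_succ, Fin.sum_univ_succ]
  have h2 : x = x 0 • e d 0 + (x 1 • e d 1 + ∑ j : Fin d, x j.succ.succ • e d j.succ.succ) := by
    have : x = ∑ j : Fin (d + 2), x j • e d j := by
      ext i
      simp [e, Finset.sum_apply, Pi.single_apply]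
    rw [Fin.sum_univ_succ, Fin.sum_univ_succ] at this
    exact this
  have h3 : ∑ j : Fin d, (if 2 ≤ ((j.succ.succ : Fin (d + 2)) : ℕ) then
      ((1 - 1 / ‖x‖) * x j.succ.succ) • e d j.succ.succ else 0) =
      (1 - 1 / ‖x‖) • ∑ j : Fin d, x j.succ.succ • e d j.succ.succ := by
    rw [Finset.smul_sum]
    refine Finset.sum_congr rfl fun j _ => ?_
    rw [if_pos (by simp), mul_smul]
  rw [h3]
  set S := ∑ j : Fin d, x j.succ.succ • e d j.succ.succ
  set c := 1 - 1 / ‖x‖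
  set b := x 0 / ‖x‖
  have h4 : c • x = c • (x 0 • e d 0 + (x 1 • e d 1 + S)) := congrArg (fun v => c • v) h2
  rw [h4]
  simp
  module

lemma e_norm (d : ℕ) (j : Fin (d + 2)) : ‖e d j‖ = 1 := by simp [e]

lemma inner_e (d : ℕ) (x : Euc d) (j : Fin (d + 2)) : inner ℝ x (e d j) = x j := by
  simp [e, EuclideanSpace.inner_single_right]

lemma DR_zero (d : ℕ) (lam : ℝ) (x : Euc d) : DR d lam x 0 = x 0 / ‖x‖ := by
  rw [DR_eq]; simp [e]

lemma norm_pos_of (d : ℕ) {x : Euc d} (hx : 0 < x 0) : 0 < ‖x‖ := by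
  rw [norm_pos_iff]; rintro rfl; simp at hx

lemma norm_sub_sq' (d : ℕ) (lam : ℝ) (x : Euc d) :
    ‖x - lam • e d 1‖ ^ 2 = ‖x‖ ^ 2 - 2 * lam * x 1 + lam ^ 2 := by
  rw [norm_sub_sq_real, inner_smul_right, inner_e, norm_smul, e_norm]
  simp; ring

lemma norm_DR_sq (d : ℕ) (lam : ℝ) (x : Euc d) :
    ‖DR d lam x - lam • e d 1‖ ^ 2 = (1 - 1 / ‖x‖) ^ 2 * ‖x‖ ^ 2 +
      2 * (1 - 1 / ‖x‖) * (x 0 / ‖x‖ - (1 - 1 / ‖x‖) * x 0) * x 0 +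
      (x 0 / ‖x‖ - (1 - 1 / ‖x‖) * x 0) ^ 2 := by
  rw [DR_eq, add_sub_cancel_left, norm_add_sq_real, inner_smul_left, inner_smul_right, inner_e,
    norm_smul, norm_smul, e_norm]
  simp only [Real.norm_eq_abs, mul_pow, sq_abs, conj_trivial]
  ring

lemma coords_le (d : ℕ) (x : Euc d) : (x 0) ^ 2 + (x 1) ^ 2 ≤ ‖x‖ ^ 2 := by
  rw [EuclideanSpace.real_norm_sq_eq, Fin.sum_univ_succ, Fin.sum_univ_succ]
  have : 0 ≤ ∑ i : Fin d, (x i.succ.succ) ^ 2 := Finset.sum_nonneg fun i _ => sq_nonneg _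
  have h : (Fin.succ 0 : Fin (d + 2)) = 1 := rfl
  rw [h]
  linarith

lemma xStar_zero (d : ℕ) (lam : ℝ) : xStar d lam 0 = Real.sqrt (1 - lam ^ 2) := by
  simp [xStar, e]

lemma xStar_norm_sq (d : ℕ) (lam : ℝ) (h0 : 0 ≤ lam) (h1 : lam < 1) :
    ‖xStar d lam‖ ^ 2 = 1 := by
  rw [xStar, norm_add_sq_real, inner_smul_left, inner_smul_right, inner_e, norm_smul, norm_smul,
    e_norm, e_norm]
  have : 0 ≤ 1 - lam ^ 2 := by nlinarith
  simp [e, Real.sq_sqrt this]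

lemma xStar_norm (d : ℕ) (lam : ℝ) (h0 : 0 ≤ lam) (h1 : lam < 1) : ‖xStar d lam‖ = 1 := by
  have := xStar_norm_sq d lam h0 h1
  nlinarith [norm_nonneg (xStar d lam)]

lemma xStar_mem (d : ℕ) (lam : ℝ) (h0 : 0 ≤ lam) (h1 : lam < 1) : xStar d lam ∈ Hplus d := by
  show 0 < xStar d lam 0
  rw [xStar_zero]
  exact Real.sqrt_pos.2 (by nlinarith)

lemma DR_xStar (d : ℕ) (lam : ℝ) (h0 : 0 ≤ lam) (h1 : lam < 1) :
    DR d lam (xStar d lam) = xStar d lam := by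
  rw [DR_eq, xStar_norm d lam h0 h1, xStar_zero]
  simp [xStar]
  abel

lemma eq_xStar (d : ℕ) (lam : ℝ) (h0 : 0 ≤ lam) (h1 : lam < 1) (x : Euc d) (hx : 0 < x 0)
    (hn : ‖x‖ = 1) (hx0 : (x 0) ^ 2 = 1 - lam ^ 2) (hx1 : lam * x 1 = lam ^ 2) :
    x = xStar d lam := by
  have h : ‖x - xStar d lam‖ ^ 2 = 0 := by
    rw [norm_sub_sq_real, xStar_norm d lam h0 h1, hn, xStar, inner_add_right, inner_smul_right,
      inner_smul_right, inner_e, inner_e, hx1, ← hx0, Real.sqrt_sq hx.le]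
    nlinarith
  have := pow_eq_zero_iff (two_ne_zero) |>.1 h
  exact sub_eq_zero.1 (norm_eq_zero.1 this)

lemma WL_decr (d : ℕ) (lam : ℝ) (h0 : 0 ≤ lam) (h1 : lam < 1) (x : Euc d) (hx : x ∈ Hplus d)
    (hne : x ≠ xStar d lam) : WL d lam (DR d lam x) < WL d lam x := by
  have hx : 0 < x 0 := hx
  have hρ := norm_pos_of d hx
  have hc := coords_le d x
  have hlog := Real.log_le_sub_one_of_pos hρ
  by_contra hcon
  rw [not_lt] at hcon
  rw [WL, WL, norm_DR_sq, norm_sub_sq', DR_zero, Real.log_div hx.ne' hρ.ne'] at hcon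
  have hE := eq_xStar d lam h0 h1 x hx
  set ρ := ‖x‖ with hρdef
  obtain ⟨s, hs⟩ : ∃ s, x 0 = ρ * s := ⟨x 0 / ρ, by field_simp⟩
  have hs0 : 0 < s := by
    rw [hs] at hx; exact pos_of_mul_pos_right hx hρ.le
  have hs1 : s ^ 2 ≤ 1 := by
    rw [hs] at hc
    have : ρ ^ 2 * s ^ 2 ≤ ρ ^ 2 * 1 := by nlinarith [sq_nonneg (x 1)]
    exact le_of_mul_le_mul_left this (by positivity)
  obtain ⟨r, hr0, hr⟩ : ∃ r, 0 ≤ r ∧ r ^ 2 = 1 - s ^ 2 :=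
    ⟨Real.sqrt (1 - s ^ 2), Real.sqrt_nonneg _, Real.sq_sqrt (by linarith)⟩
  have hx1 : x 1 ≤ ρ * r := by
    apply le_of_sq_le_sq _ (by positivity)
    rw [mul_pow, hr]
    rw [hs] at hc
    nlinarith
  have hm : 0 ≤ lam * (ρ * r - x 1) := mul_nonneg h0 (by linarith)
  have hl : 0 ≤ (1 - lam ^ 2) * (ρ - 1 - Real.log ρ) :=
    mul_nonneg (by nlinarith) (by linarith)
  have e1 : x 0 / ρ = s := by rw [hs]; field_simp
  rw [e1] at hcon
  have e2 : (1 - 1 / ρ) * x 0 = (ρ - 1) * s := by rw [hs]; field_simp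
  have e3 : (1 - 1 / ρ) ^ 2 * ρ ^ 2 = (ρ - 1) ^ 2 := by field_simp
  have e4 : 2 * (1 - 1 / ρ) * (s - (1 - 1 / ρ) * x 0) * x 0 =
      2 * ((1 - 1 / ρ) * x 0) * (s - (1 - 1 / ρ) * x 0) := by ring
  rw [e4, e2, e3, hs] at hcon
  have main : lam * (ρ * r - x 1) + (1 / 4) * s ^ 2 * (ρ - 1) ^ 2 + (1 / 2) * ρ * (lam - r) ^ 2
      ≤ 0 := by
    have hs2 : s ^ 2 = 1 - r ^ 2 := by linarith
    nlinarith
  have p1 : 0 ≤ (1 / 4) * s ^ 2 * (ρ - 1) ^ 2 := by positivity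
  have p2 : 0 ≤ (1 / 2) * ρ * (lam - r) ^ 2 := by positivity
  have q1 : (1 / 4) * s ^ 2 * (ρ - 1) ^ 2 = 0 := by linarith
  have q2 : (1 / 2) * ρ * (lam - r) ^ 2 = 0 := by linarith
  have q3 : lam * (ρ * r - x 1) = 0 := by linarith
  have t1 : ρ = 1 := by
    have : (ρ - 1) ^ 2 = 0 := by
      rcases mul_eq_zero.1 q1 with h | h
      · exact absurd h (by positivity)
      · exact h
    have := pow_eq_zero_iff (two_ne_zero) |>.1 this
    linarith
  have t2 : r = lam := by
    have : (lam - r) ^ 2 = 0 := by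
      rcases mul_eq_zero.1 q2 with h | h
      · exact absurd h (by positivity)
      · exact h
    have := pow_eq_zero_iff (two_ne_zero) |>.1 this
    linarith
  apply hne
  apply hE t1
  · rw [hs, t1, ← t2, hr]; ring
  · rw [t1, t2] at q3; linarith

lemma coord_cont (d : ℕ) (j : Fin (d + 2)) : Continuous (fun x : Euc d => x j) := by fun_prop

lemma Hplus_open (d : ℕ) : IsOpen (Hplus d) := isOpen_lt continuous_const (coord_cont d 0)

lemma DR_cont (d : ℕ) (lam : ℝ) : ContinuousOn (DR d lam) (Hplus d) := by
  have : DR d lam = fun x => lam • e d 1 + ((1 - 1 / ‖x‖) • x +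
      (x 0 / ‖x‖ - (1 - 1 / ‖x‖) * x 0) • e d 0) := funext (DR_eq d lam)
  rw [this]
  have hn : ∀ x ∈ Hplus d, ‖x‖ ≠ 0 := fun x hx => (norm_pos_of d hx).ne'
  have hc := (coord_cont d 0).continuousOn (s := Hplus d)
  have hN := (continuous_norm (E := Euc d)).continuousOn (s := Hplus d)
  have h1 : ContinuousOn (fun x : Euc d => 1 - 1 / ‖x‖) (Hplus d) :=
    continuousOn_const.sub (continuousOn_const.div hN hn)
  exact continuousOn_const.add ((h1.smul continuousOn_id).add
    (((hc.div hN hn).sub (h1.mul hc)).smul continuousOn_const))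

lemma DR_maps (d : ℕ) (lam : ℝ) {x : Euc d} (hx : x ∈ Hplus d) : DR d lam x ∈ Hplus d := by
  show 0 < DR d lam x 0
  rw [DR_zero]
  exact div_pos hx (norm_pos_of d hx)

lemma WL_cont (d : ℕ) (lam : ℝ) : ContinuousOn (WL d lam) (Hplus d) := by
  have hc := (coord_cont d 0).continuousOn (s := Hplus d)
  have hl : ContinuousOn (fun x : Euc d => Real.log (x 0)) (Hplus d) :=
    hc.log fun x hx => ne_of_gt hx
  have : Continuous (fun x : Euc d => ‖x - lam • e d 1‖) := by fun_prop
  unfold WL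
  exact ((continuousOn_const.mul (this.continuousOn.pow 2)).sub
    (continuousOn_const.mul (hc.pow 2))).sub (continuousOn_const.mul hl)

lemma WL_compact (d : ℕ) (lam : ℝ) (h0 : 0 ≤ lam) (h1 : lam < 1) (M : ℝ) :
    IsCompact {x | x ∈ Hplus d ∧ WL d lam x ≤ M} := by
  set c := (1 / 2) * (1 - lam ^ 2) with hc
  have hcpos : 0 < c := by rw [hc]; nlinarith
  have hchalf : c ≤ 1 / 2 := by rw [hc]; nlinarith
  set a := Real.exp (-(M / c)) with ha
  have hapos : 0 < a := Real.exp_pos _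
  set Q := closedBall (lam • e d 1) (4 * M ^ 2 + 10) ∩ {x : Euc d | a ≤ x 0} with hQ
  have hQc : IsCompact Q := (isCompact_closedBall _ _).inter_right
    (isClosed_le continuous_const (coord_cont d 0))
  have hQH : Q ⊆ Hplus d := fun x hx => lt_of_lt_of_le hapos hx.2
  have heq : {x | x ∈ Hplus d ∧ WL d lam x ≤ M} = Q ∩ WL d lam ⁻¹' (Iic M) := by
    ext x
    constructor
    · rintro ⟨hx, hW⟩
      have hx : 0 < x 0 := hx
      refine ⟨?_, hW⟩
      have hW' : (1 / 2) * ‖x - lam • e d 1‖ ^ 2 - (1 / 4) * (x 0) ^ 2 - c * Real.log (x 0) ≤ M :=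
        hW
      set n := ‖x - lam • e d 1‖ with hn
      have hn0 : 0 ≤ n := norm_nonneg _
      have hxn : (x 0) ^ 2 ≤ n ^ 2 := by
        have := coords_le d (x - lam • e d 1)
        have h' : (x - lam • e d 1) 0 = x 0 := by simp [e]
        rw [h'] at this
        nlinarith [sq_nonneg ((x - lam • e d 1) 1)]
      have hxn' : x 0 ≤ n := le_of_sq_le_sq hxn hn0
      have hlog := Real.log_le_sub_one_of_pos hx
      constructor
      · rw [mem_closedBall, dist_eq_norm, ← hn]
        have : c * Real.log (x 0) ≤ (1 / 2) * n := by
          calc c * Real.log (x 0) ≤ c * n := by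
                apply mul_le_mul_of_nonneg_left _ hcpos.le; linarith
            _ ≤ _ := by apply mul_le_mul_of_nonneg_right hchalf hn0
        by_contra hlt
        rw [not_le] at hlt
        nlinarith [sq_nonneg (M - 1), sq_nonneg M]
      · show a ≤ x 0
        rw [ha, ← Real.le_log_iff_exp_le hx]
        have : -(c * Real.log (x 0)) ≤ M := by nlinarith [sq_nonneg n]
        rw [neg_le, le_div_iff₀ hcpos] 
        linarith
    · rintro ⟨hx, hW⟩
      exact ⟨hQH hx, hW⟩
  rw [heq]
  exact hQc.of_isClosed_subset
    (((WL_cont d lam).mono hQH).preimage_isClosed_of_isClosed hQc.isClosed isClosed_Iic)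
    inter_subset_left

lemma V_cont (d : ℕ) (lam : ℝ) (h0 : 0 ≤ lam) (h1 : lam < 1) :
    ContinuousAt (V d lam) (xStar d lam) := by
  have hm := xStar_mem d lam h0 h1
  have hD : ContinuousAt (DR d lam) (xStar d lam) :=
    (DR_cont d lam).continuousAt ((Hplus_open d).mem_nhds hm)
  have hF : ContinuousAt (F d lam) (xStar d lam) := by
    have hc : Continuous (fun x : Euc d => x 0) := coord_cont d 0
    have hs : Continuous (fun x : Euc d => Real.sqrt (1 - (x 0) ^ 2)) :=
      (continuous_const.sub (hc.pow 2)).sqrt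
    have hl : ContinuousAt (fun x : Euc d => Real.log (x 0)) (xStar d lam) :=
      hc.continuousAt.log (ne_of_gt hm)
    have hl2 : Continuous (fun x : Euc d => Real.log (1 + Real.sqrt (1 - (x 0) ^ 2))) :=
      (continuous_const.add hs).log fun x => ne_of_gt (add_pos_of_pos_of_nonneg one_pos (Real.sqrt_nonneg _))
    have hN : Continuous (fun x : Euc d => ‖x - lam • e d 1‖) := by fun_prop
    have h1 : Continuous (fun x : Euc d => (1 / 2) * ‖x - lam • e d 1‖ ^ 2 -
      lam * Real.log (1 + Real.sqrt (1 - (x 0) ^ 2)) + lam * Real.sqrt (1 - (x 0) ^ 2)) :=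
      ((continuous_const.mul (hN.pow 2)).sub (continuous_const.mul hl2)).add
        (continuous_const.mul hs)
    exact h1.continuousAt.add (continuousAt_const.mul hl)
  have hF' : ContinuousAt (F d lam) (DR d lam (xStar d lam)) := by
    rw [DR_xStar d lam h0 h1]; exact hF
  have := ContinuousAt.comp (f := DR d lam) (x := xStar d lam) hF' hD
  exact this.sub continuousAt_const

/-- Abstract robustness. -/
lemma robust {X : Type*} [MetricSpace X] (H : Set X) (hH : IsOpen H) (T : X → X)
    (hT : ContinuousOn T H) (hTm : ∀ x ∈ H, T x ∈ H) (W : X → ℝ) (hW : ContinuousOn W H)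
    (p : X) (hp : p ∈ H) (hTp : T p = p) (hdec : ∀ x ∈ H, x ≠ p → W (T x) < W x)
    (hcomp : ∀ M, IsCompact {x | x ∈ H ∧ W x ≤ M}) :
    ∃ τ : X → ℝ, (∀ x, 0 ≤ τ x) ∧ (∀ x ∈ H, x ≠ p → 0 < τ x) ∧
      (∀ x ∈ H, closedBall x (τ x) ⊆ H) ∧
      ∀ K : Set X, K ⊆ H → IsCompact K → ∀ η : ℝ, 0 < η → ∃ N : ℕ, ∀ n ≥ N,
        ∀ φ : ℕ → X, φ 0 ∈ K → (∀ n, ∃ y ∈ closedBall (φ n) (τ (φ n)),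
          φ (n + 1) ∈ closedBall (T y) (τ (T y))) → dist (φ n) p < η := by
  have hmin : ∀ x ∈ H, W p ≤ W x := by
    intro x hx
    obtain ⟨z, hz, hzm⟩ := (hcomp (W x)).exists_isMinOn ⟨x, hx, le_rfl⟩
      (hW.mono fun y hy => hy.1)
    by_cases hzp : z = p
    · exact hzp ▸ hz.2
    · have h1 := hdec z hz.1 hzp
      have h2 : W z ≤ W (T z) := hzm ⟨hTm z hz.1, h1.le.trans hz.2⟩
      linarith
  have hmin' : ∀ x ∈ H, x ≠ p → W p < W x := fun x hx hxp =>
    (hmin _ (hTm x hx)).trans_lt (hdec x hx hxp)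
  have hWT : ContinuousOn (fun x => W (T x)) H := hW.comp hT hTm
  set H' : Set X := H ∩ {p}ᶜ with hH'
  have hH'o : IsOpen H' := hH.inter isOpen_compl_singleton
  set O : Set (X × X) := (H' ×ˢ H') ∩
    (fun q : X × X => W (T q.2) - (W q.1 + W (T q.1)) / 2) ⁻¹' (Iio 0) with hO
  have hOo : IsOpen O := by
    refine ContinuousOn.isOpen_inter_preimage ?_ (hH'o.prod hH'o) isOpen_Iio
    have f1 : MapsTo (Prod.fst : X × X → X) (H' ×ˢ H') H := fun q hq => hq.1.1
    have f2 : MapsTo (Prod.snd : X × X → X) (H' ×ˢ H') H := fun q hq => hq.2.1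
    exact (hWT.comp continuousOn_snd f2).sub
      (((hW.comp continuousOn_fst f1).add (hWT.comp continuousOn_fst f1)).div_const 2)
  have hpO : (p, p) ∈ Oᶜ := fun h => h.1.1.2 rfl
  set σ : X → ℝ := fun x => infDist (x, x) Oᶜ with hσ
  have hσ0 : ∀ x, 0 ≤ σ x := fun x => infDist_nonneg
  have hσlip : ∀ x y, σ x ≤ σ y + dist x y := by
    intro x y
    have := infDist_le_infDist_add_dist (s := Oᶜ) (x := (x, x)) (y := (y, y))
    simpa [Prod.dist_eq] using this
  have hσp : ∀ x, σ x ≤ dist x p := by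
    intro x
    have := infDist_le_dist_of_mem (x := (x, x)) hpO
    simpa [Prod.dist_eq] using this
  have hσO : ∀ x y, dist x y < σ x → (x, y) ∈ O := by
    intro x y hxy
    by_contra hn
    have := infDist_le_dist_of_mem (x := (x, x)) (s := Oᶜ) (y := (x, y)) hn
    simp [Prod.dist_eq] at this
    exact absurd hxy (not_lt.2 this)
  have hσpos : ∀ x ∈ H, x ≠ p → 0 < σ x := by
    intro x hx hxp
    apply (hOo.isClosed_compl.notMem_iff_infDist_pos ⟨_, hpO⟩).1
    intro hn
    apply hn
    refine ⟨⟨⟨hx, hxp⟩, ⟨hx, hxp⟩⟩, ?_⟩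
    have := hdec x hx hxp
    show W (T x) - (W x + W (T x)) / 2 < 0
    linarith
  have hσpp : σ p = 0 := le_antisymm (by simpa using hσp p) (hσ0 p)
  have hball : ∀ x ∈ H, ∀ y, dist x y ≤ 3 / 4 * σ x →
      y ∈ H ∧ W (T y) ≤ (W x + W (T x)) / 2 := by
    intro x hx y hy
    by_cases hxp : x = p
    · subst hxp
      rw [hσpp, mul_zero] at hy
      have : x = y := dist_le_zero.1 hy
      subst this
      refine ⟨hx, ?_⟩
      rw [hTp]; linarith
    · have := hσO x y (by linarith [hσpos x hx hxp])
      refine ⟨this.1.2.1, ?_⟩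
      have h2 : W (T y) - (W x + W (T x)) / 2 < 0 := this.2
      linarith
  refine ⟨fun x => 1 / 4 * σ x, fun x => by have := hσ0 x; positivity,
    fun x hx hxp => by have := hσpos x hx hxp; positivity, ?_, ?_⟩
  · intro x hx y hy
    rw [mem_closedBall, dist_comm] at hy
    exact (hball x hx y (by linarith [hσ0 x])).1
  intro K hKH hK η hη
  obtain ⟨M, hM⟩ : ∃ M, ∀ x ∈ K, W x ≤ M := by
    obtain ⟨M, hM⟩ := (hK.image_of_continuousOn (hW.mono hKH)).bddAbove
    exact ⟨M, fun x hx => hM ⟨x, hx, rfl⟩⟩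
  have hS := hcomp M
  set S := {x | x ∈ H ∧ W x ≤ M} with hSdef
  have hSH : S ⊆ H := fun x hx => hx.1
  have hC : IsCompact (S ∩ (ball p (η / 2))ᶜ) := hS.inter_right isOpen_ball.isClosed_compl
  obtain ⟨m, hm, hmC⟩ := hC.exists_forall_le' (hW.mono (inter_subset_left.trans hSH))
    (a := W p) (fun b hb => hmin' b hb.1.1 (by
      rintro rfl; exact hb.2 (mem_ball_self (by linarith))))
  have hC2 : IsCompact (S ∩ W ⁻¹' (Ici m)) := hS.of_isClosed_subset
    ((hW.mono hSH).preimage_isClosed_of_isClosed hS.isClosed isClosed_Ici) inter_subset_left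
  obtain ⟨β, hβ, hβC⟩ := hC2.exists_forall_le' (f := fun x => W x - W (T x))
    ((hW.sub hWT).mono (inter_subset_left.trans hSH)) (a := 0) (fun b hb => by
      have : b ≠ p := by
        rintro rfl; exact absurd hb.2 (not_le.2 hm)
      have := hdec b hb.1.1 this
      linarith)
  obtain ⟨N, hN⟩ := exists_nat_gt ((M - W p) / (β / 2))
  rw [div_lt_iff₀ (by positivity)] at hN
  refine ⟨N + 1, ?_⟩
  intro n hn φ hφ0 hφ
  choose y hy hyφ using hφ
  have hle : ∀ x ∈ H, W (T x) ≤ W x := fun x hx => by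
    by_cases hxp : x = p
    · rw [hxp, hTp]
    · exact (hdec x hx hxp).le
  have hstep : ∀ k, T (y k) ∈ H → T (y (k + 1)) ∈ H ∧
      W (T (y (k + 1))) ≤ (W (T (y k)) + W (T (T (y k)))) / 2 := by
    intro k hk
    have a1 := hyφ k
    have a2 := hy (k + 1)
    rw [mem_closedBall, dist_comm] at a1 a2
    have a3 := hσlip (φ (k + 1)) (T (y k))
    rw [dist_comm] at a3
    have a4 := dist_triangle (T (y k)) (φ (k + 1)) (y (k + 1))
    have := hball (T (y k)) hk (y (k + 1)) (by linarith [hσ0 (T (y k))])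
    exact ⟨hTm _ this.1, this.2⟩
  have hind : ∀ k, T (y k) ∈ S ∧ (W (T (y k)) < m ∨ W (T (y k)) ≤ M - k * (β / 2)) := by
    intro k
    induction k with
    | zero =>
      have a2 := hy 0
      rw [mem_closedBall, dist_comm] at a2
      have := hball (φ 0) (hKH hφ0) (y 0) (by linarith [hσ0 (φ 0)])
      have h3 := hle _ (hKH hφ0)
      have h4 := hM _ hφ0
      have h5 : W (T (y 0)) ≤ M := by linarith
      refine ⟨⟨hTm _ this.1, h5⟩, Or.inr (by simpa using h5)⟩
    | succ k ih =>
      obtain ⟨hk, hor⟩ := ih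
      obtain ⟨b1, b2⟩ := hstep k hk.1
      have b3 := hle _ hk.1
      have b4 := hk.2
      refine ⟨⟨b1, by linarith⟩, ?_⟩
      by_cases hlt : W (T (y k)) < m
      · left; linarith
      · right
        have b5 := hβC (T (y k)) ⟨hk, not_lt.1 hlt⟩
        have b6 := hor.resolve_left hlt
        push_cast
        linarith
  obtain ⟨k, rfl⟩ : ∃ k, n = k + 1 := ⟨n - 1, by omega⟩
  have hkN : N ≤ k := by omega
  obtain ⟨hk, hor⟩ := hind k
  have hlt : W (T (y k)) < m := by
    rcases hor with h | h
    · exact h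
    · have c1 : (N : ℝ) * (β / 2) ≤ k * (β / 2) := by
        have : (N : ℝ) ≤ k := by exact_mod_cast hkN
        gcongr
      linarith [hmin _ hk.1]
  have hd : dist (T (y k)) p < η / 2 := by
    by_contra hcon
    exact absurd (hmC (T (y k)) ⟨hk, fun h => hcon h⟩) (not_le.2 hlt)
  have a1 := hyφ k
  rw [mem_closedBall] at a1
  have a2 := hσp (T (y k))
  have a3 := dist_triangle (φ (k + 1)) (T (y k)) p
  linarith [hσ0 (T (y k))]


/-- For `λ ∈ [0,1)` there is `τ : H₊ → [0,∞)` with `τ(x) > 0` for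
`x ≠ x*` and `B[x,τ(x)] ⊆ H₊`, such that for every compact `K ⊆ H₊`,
`lim_{n→∞} sup V(φ(n)) = 0` over all `τ`-perturbed solutions `φ` starting in `K`. -/
theorem stmt18 (d : ℕ) (lam : ℝ) (h0 : 0 ≤ lam) (h1 : lam < 1) :
    ∃ τ : Euc d → ℝ,
      (∀ x ∈ Hplus d, 0 ≤ τ x) ∧
      (∀ x ∈ Hplus d, x ≠ xStar d lam → 0 < τ x) ∧
      (∀ x ∈ Hplus d, closedBall x (τ x) ⊆ Hplus d) ∧
      ∀ K : Set (Euc d), K ⊆ Hplus d → IsCompact K →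
        ∀ ε : ℝ, 0 < ε → ∃ N : ℕ, ∀ n ≥ N, ∀ x ∈ K,
          ∀ φ : ℕ → Euc d, PerturbedSol d (DR d lam) τ x φ →
            V d lam (φ n) ≤ ε := by
  obtain ⟨τ, t0, t1, t2, t3⟩ := robust (Hplus d) (Hplus_open d) (DR d lam) (DR_cont d lam)
    (fun x hx => DR_maps d lam hx) (WL d lam) (WL_cont d lam) (xStar d lam)
    (xStar_mem d lam h0 h1) (DR_xStar d lam h0 h1) (WL_decr d lam h0 h1)
    (WL_compact d lam h0 h1)
  refine ⟨τ, fun x _ => t0 x, t1, t2, ?_⟩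
  intro K hK hKc ε hε
  have hV0 : V d lam (xStar d lam) = 0 := by rw [V, DR_xStar d lam h0 h1, sub_self]
  obtain ⟨η, hη, hηV⟩ := Metric.continuousAt_iff.1 (V_cont d lam h0 h1) ε hε
  obtain ⟨N, hN⟩ := t3 K hK hKc η hη
  refine ⟨N, fun n hn x hx φ hφ => ?_⟩
  obtain ⟨p0, _, p2⟩ := hφ
  have := hηV (hN n hn φ (p0 ▸ hx) p2)
  rw [hV0, Real.dist_eq, sub_zero] at this
  exact (abs_lt.1 this).2.le
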